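/- Let X and Y be ∞-pseudo-metric spaces. If (1,α) is an APD profile of X and (1,β) is an APD profile of Y, then (2, α·β + α + β) is an APD profile of X × Y with the supremum ∞-pseudo-metric; that is, for all reals 0 < r ≤ s there is a decomposition X × Y = W_0 ∪ W_1 such that W_0 is the union of at most 2 subsets of scale-r-dimension 0 and W_1 is the union of at most ⌊α(r)⌋·⌊β(r)⌋ + ⌊α(r)⌋ + ⌊β(r)⌋ subsets of scale-s-dimension 0. -/

import Mathlib

open Set
open scoped ENNReal

/-- `y` is joined to `x` by a scale-`r`-chain in `A`: a finite sequence of points of `A`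
starting at `x` and ending at `y`, consecutive points of which have intersecting open
`r`-balls. -/
def ScaleChain {X : Type*} [PseudoEMetricSpace X] (r : ℝ) (A : Set X) (x y : X) : Prop :=
  ∃ n : ℕ, ∃ c : ℕ → X, (∀ i ≤ n, c i ∈ A) ∧ c 0 = x ∧ c n = y ∧
    ∀ i < n,
      (EMetric.ball (c i) (ENNReal.ofReal r) ∩
        EMetric.ball (c (i + 1)) (ENNReal.ofReal r)).Nonempty

/-- The scale-`r`-component of `x` in `A`: all points of `A` joined to `x` by a
scale-`r`-chain in `A`. -/
def ScaleComponent {X : Type*} [PseudoEMetricSpace X] (r : ℝ) (A : Set X) (x : X) : Set X :=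
  {y | ScaleChain r A x y}

/-- `A` has scale-`r`-dimension `0`: there is a finite bound on the diameters of all
scale-`r`-components of `A`. -/
def ScaleDimZero {X : Type*} [PseudoEMetricSpace X] (r : ℝ) (A : Set X) : Prop :=
  ∃ M : ℝ≥0∞, M ≠ ⊤ ∧ ∀ x ∈ A, EMetric.diam (ScaleComponent r A x) ≤ M

/-- `A` is the union of at most `n` subsets of scale-`s`-dimension `0`. -/
def UnionAtMost {X : Type*} [PseudoEMetricSpace X] (n : ℕ) (s : ℝ) (A : Set X) : Prop :=
  ∃ G : Fin n → Set X, A = ⋃ j, G j ∧ ∀ j, ScaleDimZero s (G j)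

/-- `(1, α)` is an APD profile of `X`: for all reals `0 < r ≤ s` there is a decomposition
`X = X₀ ∪ X₁` with `X₀` of scale-`r`-dimension `0` and `X₁` the union of at most `⌊α r⌋`
subsets of scale-`s`-dimension `0`. -/
def APDPair (X : Type*) [PseudoEMetricSpace X] (α : ℝ → ℝ) : Prop :=
  ∀ r s : ℝ, 0 < r → r ≤ s →
    ∃ X₀ X₁ : Set X, X₀ ∪ X₁ = univ ∧ ScaleDimZero r X₀ ∧ UnionAtMost (Nat.floor (α r)) s X₁

/-- The open `r`-balls around `x` and `y` intersect. -/
def BallsMeet {X : Type*} [PseudoEMetricSpace X] (r : ℝ) (x y : X) : Prop :=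
  (Metric.eball x (ENNReal.ofReal r) ∩ Metric.eball y (ENNReal.ofReal r)).Nonempty

section Chains

variable {X Y : Type*} [PseudoEMetricSpace X] [PseudoEMetricSpace Y] {r s t : ℝ}

theorem BallsMeet.symm {x y : X} (h : BallsMeet r x y) : BallsMeet r y x := by
  obtain ⟨z, hx, hy⟩ := h
  exact ⟨z, hy, hx⟩

theorem BallsMeet.edist_lt {x y : X} (h : BallsMeet r x y) :
    edist x y < ENNReal.ofReal r + ENNReal.ofReal r := by
  obtain ⟨z, hx, hy⟩ := h
  have hx' : edist z x < ENNReal.ofReal r := hx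
  have hy' : edist z y < ENNReal.ofReal r := hy
  exact (edist_triangle_left x y z).trans_lt (ENNReal.add_lt_add hx' hy')

theorem BallsMeet.of_edist_le {x y x' y' : X} (h : BallsMeet r x y) (hr : 0 ≤ r) (ht : 0 ≤ t)
    (hx : edist x x' ≤ ENNReal.ofReal t) (hy : edist y y' ≤ ENNReal.ofReal t) :
    BallsMeet (r + t) x' y' := by
  obtain ⟨z, hzx, hzy⟩ := h
  have hzx' : edist z x < ENNReal.ofReal r := hzx
  have hzy' : edist z y < ENNReal.ofReal r := hzy
  refine ⟨z, ?_, ?_⟩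
  · change edist z x' < _
    rw [ENNReal.ofReal_add hr ht]
    exact (edist_triangle z x x').trans_lt
      (ENNReal.add_lt_add_of_lt_of_le (ne_top_of_le_ne_top ENNReal.ofReal_ne_top hx) hzx' hx)
  · change edist z y' < _
    rw [ENNReal.ofReal_add hr ht]
    exact (edist_triangle z y y').trans_lt
      (ENNReal.add_lt_add_of_lt_of_le (ne_top_of_le_ne_top ENNReal.ofReal_ne_top hy) hzy' hy)

theorem BallsMeet.fst {p q : X × Y} (h : BallsMeet r p q) : BallsMeet r p.1 q.1 := by
  obtain ⟨z, hp, hq⟩ := h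
  exact ⟨z.1, Metric.mem_eball.2 ((le_max_left _ _).trans_lt (Metric.mem_eball.1 hp)),
    Metric.mem_eball.2 ((le_max_left _ _).trans_lt (Metric.mem_eball.1 hq))⟩

theorem BallsMeet.snd {p q : X × Y} (h : BallsMeet r p q) : BallsMeet r p.2 q.2 := by
  obtain ⟨z, hp, hq⟩ := h
  exact ⟨z.2, Metric.mem_eball.2 ((le_max_right _ _).trans_lt (Metric.mem_eball.1 hp)),
    Metric.mem_eball.2 ((le_max_right _ _).trans_lt (Metric.mem_eball.1 hq))⟩

theorem BallsMeet.swap {p q : X × Y} (h : BallsMeet r p q) : BallsMeet r p.swap q.swap := by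
  obtain ⟨z, hp, hq⟩ := h
  refine ⟨z.swap, ?_, ?_⟩
  · exact Metric.mem_eball.2 ((max_comm _ _).trans_lt (Metric.mem_eball.1 hp))
  · exact Metric.mem_eball.2 ((max_comm _ _).trans_lt (Metric.mem_eball.1 hq))

theorem ScaleChain.left_mem {A : Set X} {x y : X} (h : ScaleChain r A x y) : x ∈ A := by
  obtain ⟨n, c, hc, rfl, -, -⟩ := h
  exact hc 0 (Nat.zero_le n)

theorem ScaleChain.refl {A : Set X} {x : X} (hx : x ∈ A) : ScaleChain r A x x :=
  ⟨0, fun _ => x, fun _ _ => hx, rfl, rfl, fun _ hi => absurd hi (Nat.not_lt_zero _)⟩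

theorem ScaleChain.cons {A : Set X} {x y z : X} (hx : x ∈ A) (hxy : BallsMeet r x y)
    (h : ScaleChain r A y z) : ScaleChain r A x z := by
  obtain ⟨n, c, hc, rfl, rfl, hn⟩ := h
  refine ⟨n + 1, fun i => Nat.casesOn i x c, ?_, rfl, rfl, ?_⟩
  · rintro (_ | i) hi
    · exact hx
    · exact hc i (by omega)
  · rintro (_ | i) hi
    · exact hxy
    · exact hn i (by omega)

theorem ScaleChain.map {A : Set X} {B : Set Y} {x y : X} (f : X → Y)
    (hf : ∀ a ∈ A, f a ∈ B)
    (hmeet : ∀ a ∈ A, ∀ b ∈ A, BallsMeet r a b → BallsMeet s (f a) (f b))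
    (h : ScaleChain r A x y) : ScaleChain s B (f x) (f y) := by
  obtain ⟨n, c, hc, rfl, rfl, hn⟩ := h
  exact ⟨n, fun i => f (c i), fun i hi => hf _ (hc i hi), rfl, rfl,
    fun i hi => hmeet _ (hc i hi.le) _ (hc (i + 1) hi) (hn i hi)⟩

theorem ScaleChain.mono {A B : Set X} {x y : X} (hAB : A ⊆ B) (h : ScaleChain r A x y) :
    ScaleChain r B x y :=
  h.map id hAB fun _ _ _ _ hm => hm

/-- A property preserved by every step holds along the whole chain. -/
theorem ScaleChain.inter_of_step {A : Set X} {x y : X} (P : X → Prop)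
    (hP : ∀ a ∈ A, ∀ b ∈ A, BallsMeet r a b → P a → P b) (hx : P x)
    (h : ScaleChain r A x y) : ScaleChain r {a | a ∈ A ∧ P a} x y := by
  obtain ⟨n, c, hc, rfl, rfl, hn⟩ := h
  have key : ∀ i ≤ n, P (c i) := by
    intro i
    induction i with
    | zero => exact fun _ => hx
    | succ i ih =>
      exact fun hi => hP _ (hc i (by omega)) _ (hc _ hi) (hn i hi) (ih (by omega))
  exact ⟨n, c, fun i hi => ⟨hc i hi, key i hi⟩, rfl, rfl, hn⟩

theorem scaleComponent_eq_of_ballsMeet {A : Set X} {x y : X} (hx : x ∈ A) (hy : y ∈ A)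
    (h : BallsMeet r x y) : ScaleComponent r A x = ScaleComponent r A y :=
  Set.Subset.antisymm (fun _ hz => ScaleChain.cons hy h.symm hz)
    fun _ hz => ScaleChain.cons hx h hz

end Chains

section DimZero

variable {X Y : Type*} [PseudoEMetricSpace X] [PseudoEMetricSpace Y] {r s t : ℝ}

theorem scaleDimZero_iff {A : Set X} :
    ScaleDimZero r A ↔
      ∃ M : ℝ≥0∞, M ≠ ⊤ ∧ ∀ x y, ScaleChain r A x y → edist x y ≤ M := by
  constructor
  · rintro ⟨M, hM, h⟩
    exact ⟨M, hM, fun x y hxy =>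
      (Metric.edist_le_ediam_of_mem (s := ScaleComponent r A x)
        (ScaleChain.refl hxy.left_mem) hxy).trans (h x hxy.left_mem)⟩
  · rintro ⟨M, hM, h⟩
    exact ⟨M + M, ENNReal.add_ne_top.2 ⟨hM, hM⟩, fun x _ => Metric.ediam_le fun y hy z hz =>
      (edist_triangle_left y z x).trans (add_le_add (h x y hy) (h x z hz))⟩

theorem scaleDimZero_of_finite {ι : Type*} [Finite ι] {A : Set X} (C : ι → Set X)
    (hC : ∀ i, ScaleDimZero r (C i))
    (h : ∀ x y, ScaleChain r A x y → ∃ i, ScaleChain r (C i) x y) : ScaleDimZero r A := by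
  cases nonempty_fintype ι
  choose M hM hMC using fun i => scaleDimZero_iff.1 (hC i)
  refine scaleDimZero_iff.2 ⟨∑ i, M i, ENNReal.sum_ne_top.2 fun i _ => hM i, fun x y hxy => ?_⟩
  obtain ⟨i, hi⟩ := h x y hxy
  exact (hMC i x y hi).trans (Finset.single_le_sum (fun _ _ => zero_le) (Finset.mem_univ i))

/-- A set within distance `t` of a set of scale-`(r + t)`-dimension `0` has
scale-`r`-dimension `0`. -/
theorem ScaleDimZero.of_edist_le {A B : Set X} (hr : 0 ≤ r) (ht : 0 ≤ t)
    (hB : ScaleDimZero (r + t) B)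
    (hAB : ∀ a ∈ A, ∃ b ∈ B, edist a b ≤ ENNReal.ofReal t) : ScaleDimZero r A := by
  obtain ⟨M, hM, h⟩ := scaleDimZero_iff.1 hB
  have hAB' : ∀ a, ∃ b, a ∈ A → b ∈ B ∧ edist a b ≤ ENNReal.ofReal t := by
    intro a
    by_cases ha : a ∈ A
    · obtain ⟨b, hb⟩ := hAB a ha
      exact ⟨b, fun _ => hb⟩
    · exact ⟨a, fun ha' => absurd ha' ha⟩
  choose f hf using hAB'
  refine scaleDimZero_iff.2 ⟨ENNReal.ofReal t + M + ENNReal.ofReal t, by simp [hM], ?_⟩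
  intro x y hxy
  have hchain : ScaleChain (r + t) B (f x) (f y) :=
    hxy.map f (fun a ha => (hf a ha).1)
      fun a ha b hb hm => hm.of_edist_le hr ht (hf a ha).2 (hf b hb).2
  have hy : y ∈ A := by
    obtain ⟨n, c, hc, -, rfl, -⟩ := hxy
    exact hc n le_rfl
  refine (edist_triangle4 x (f x) (f y) y).trans (add_le_add (add_le_add ?_ (h _ _ hchain)) ?_)
  · exact (hf x hxy.left_mem).2
  · rw [edist_comm]
    exact (hf y hy).2

theorem ScaleDimZero.mono {A B : Set X} (hr : 0 ≤ r) (hrs : r ≤ s) (hB : ScaleDimZero s B)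
    (hAB : A ⊆ B) : ScaleDimZero r A :=
  ScaleDimZero.of_edist_le (t := s - r) hr (sub_nonneg.2 hrs) (by simpa using hB)
    fun a ha => ⟨a, hAB ha, by simp⟩

theorem ScaleDimZero.prod {A : Set X} {B : Set Y} (hA : ScaleDimZero r A)
    (hB : ScaleDimZero r B) : ScaleDimZero r (A ×ˢ B) := by
  obtain ⟨M, hM, h⟩ := scaleDimZero_iff.1 hA
  obtain ⟨M', hM', h'⟩ := scaleDimZero_iff.1 hB
  refine scaleDimZero_iff.2 ⟨max M M', max_lt hM.lt_top hM'.lt_top |>.ne, fun p q hpq => ?_⟩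
  exact max_le_max
    (h _ _ (hpq.map Prod.fst (fun _ ha => ha.1) fun _ _ _ _ hm => hm.fst))
    (h' _ _ (hpq.map Prod.snd (fun _ ha => ha.2) fun _ _ _ _ hm => hm.snd))

theorem ScaleDimZero.preimage_swap {W : Set (Y × X)} (hW : ScaleDimZero r W) :
    ScaleDimZero r (Prod.swap ⁻¹' W : Set (X × Y)) := by
  obtain ⟨M, hM, h⟩ := scaleDimZero_iff.1 hW
  refine scaleDimZero_iff.2 ⟨M, hM, fun p q hpq => ?_⟩
  have := h _ _ (hpq.map Prod.swap (fun _ ha => ha) fun _ _ _ _ hm => hm.swap)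
  exact (max_comm _ _).trans_le this

theorem unionAtMost_iUnion {ι : Type*} [Fintype ι] {n : ℕ} (hn : Fintype.card ι = n)
    (G : ι → Set X) (hG : ∀ i, ScaleDimZero s (G i)) : UnionAtMost n s (⋃ i, G i) := by
  let e := Fintype.equivFinOfCardEq hn
  exact ⟨fun j => G (e.symm j), (e.symm.surjective.iUnion_comp G).symm, fun j => hG _⟩

end DimZero

/-- A space with an APD profile is, at every scale, a finite union of sets of dimension `0`. -/
theorem APDPair.exists_finite_cover {X : Type*} [PseudoEMetricSpace X] {α : ℝ → ℝ}
    (hX : APDPair X α) {s : ℝ} (hs : 0 < s) :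
    ∃ (N : ℕ) (Z : Fin (N + 1) → Set X), (∀ x, ∃ i, x ∈ Z i) ∧ ∀ i, ScaleDimZero s (Z i) := by
  obtain ⟨X₀, X₁, hcov, h₀, G, rfl, hG⟩ := hX s s hs le_rfl
  refine ⟨_, Fin.cons X₀ G, fun x => ?_, fun i => ?_⟩
  · have hx : x ∈ X₀ ∪ ⋃ j, G j := hcov ▸ mem_univ x
    rcases hx with hx | hx
    · exact ⟨0, hx⟩
    · obtain ⟨j, hj⟩ := mem_iUnion.1 hx
      exact ⟨j.succ, hj⟩
  · exact Fin.cases h₀ hG i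

theorem infEDist_lt_of_ballsMeet {X : Type*} [PseudoEMetricSpace X] {s : ℝ} (hs : 0 < s) {A : Set X}
    {a b : X} (h : BallsMeet s a b) {u : ℝ} (hu : 0 ≤ u)
    (ha : Metric.infEDist a A < ENNReal.ofReal u) :
    Metric.infEDist b A < ENNReal.ofReal (u + 2 * s) := by
  rw [ENNReal.ofReal_add hu (by positivity), two_mul, ENNReal.ofReal_add hs.le hs.le]
  refine Metric.infEDist_le_infEDist_add_edist.trans_lt (ENNReal.add_lt_add ha ?_)
  exact h.symm.edist_lt

/-- Any number of decompositions at scales `r ≤ s`, whose scale-`s` parts with the same index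
stay apart from each other. They are cut out by disjoint shells around the pieces of a single
decomposition. -/
theorem APDPair.exists_separated_decompositions {Y : Type*} [PseudoEMetricSpace Y] {β : ℝ → ℝ}
    (hY : APDPair Y β) {r s : ℝ} (hr : 0 < r) (hrs : r ≤ s) (N : ℕ) :
    ∃ (B : Fin N → Set Y) (A : Fin N → Fin ⌊β r⌋₊ → Set Y) (D : Fin ⌊β r⌋₊ → Set Y),
      (∀ i y, y ∈ B i ∨ ∃ k, y ∈ A i k) ∧ (∀ i, ScaleDimZero r (B i)) ∧
      (∀ i k, A i k ⊆ D k) ∧ (∀ k, ScaleDimZero s (D k)) ∧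
      ∀ k i j a b, a ∈ A i k → b ∈ A j k → BallsMeet s a b → i = j := by
  have hs : 0 < s := hr.trans_le hrs
  have hT : 0 ≤ 4 * N * s := by positivity
  obtain ⟨Y₀, Y₁, hcov, h₀, G, rfl, hG⟩ := hY r (s + 4 * N * s) hr (by linarith)
  have hD : ∀ k, ScaleDimZero s
      {y | Metric.infEDist y (G k) < ENNReal.ofReal (4 * N * s)} := fun k =>
    (hG k).of_edist_le hs.le hT fun a ha => by
      obtain ⟨b, hb, hab⟩ := Metric.infEDist_lt_iff.1 ha
      exact ⟨b, hb, hab.le⟩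
  have hiN : ∀ i : Fin N, 4 * (i : ℝ) * s + 2 * s ≤ 4 * N * s := fun i => by
    have : (i : ℝ) + 1 ≤ N := by exact_mod_cast i.2
    nlinarith
  refine ⟨fun i => {y | ∀ k, Metric.infEDist y (G k) < ENNReal.ofReal (4 * i * s) ∨
        ENNReal.ofReal (4 * i * s + 2 * s) ≤ Metric.infEDist y (G k)},
    fun i k => {y | ENNReal.ofReal (4 * i * s) ≤ Metric.infEDist y (G k) ∧
        Metric.infEDist y (G k) < ENNReal.ofReal (4 * i * s + 2 * s)},
    fun k => {y | Metric.infEDist y (G k) < ENNReal.ofReal (4 * N * s)},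
    ?_, ?_, ?_, hD, ?_⟩
  · intro i y
    by_contra! h
    obtain ⟨h₁, h₂⟩ := h
    apply h₁
    intro k
    by_contra! hk
    exact h₂ k hk
  · intro i
    refine scaleDimZero_of_finite (ι := Option (Fin ⌊β r⌋₊))
      (fun o => o.elim Y₀
        fun k => {y | Metric.infEDist y (G k) < ENNReal.ofReal (4 * N * s)}) ?_ ?_
    · rintro (_ | k)
      · exact h₀
      · exact (hD k).mono hr.le hrs subset_rfl
    · intro x y hxy
      have hmeet : ∀ a b : Y, BallsMeet r a b → BallsMeet s a b := fun a b h => by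
        simpa using h.of_edist_le (t := s - r) hr.le (by linarith)
          (by simp : edist a a ≤ _) (by simp : edist b b ≤ _)
      have hi0 : 0 ≤ 4 * (i : ℝ) * s := by positivity
      have hstep : ∀ k, ∀ a b : Y, (Metric.infEDist b (G k) < ENNReal.ofReal (4 * i * s) ∨
          ENNReal.ofReal (4 * i * s + 2 * s) ≤ Metric.infEDist b (G k)) → BallsMeet r a b →
          Metric.infEDist a (G k) < ENNReal.ofReal (4 * i * s) →
          Metric.infEDist b (G k) < ENNReal.ofReal (4 * i * s) := fun k a b hb hab ha =>
        hb.resolve_right (infEDist_lt_of_ballsMeet hs (hmeet a b hab) hi0 ha).not_ge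
      by_cases hx : ∃ k, Metric.infEDist x (G k) < ENNReal.ofReal (4 * i * s)
      · obtain ⟨k, hk⟩ := hx
        refine ⟨some k, (hxy.inter_of_step
          (fun z => Metric.infEDist z (G k) < ENNReal.ofReal (4 * i * s))
          (fun a _ b hb hab => hstep k a b (by exact hb k) hab) hk).mono fun z hz => ?_⟩
        exact hz.2.trans_le (ENNReal.ofReal_le_ofReal (by linarith [hiN i]))
      · refine ⟨none, (hxy.inter_of_step
          (fun z => ¬ ∃ k, Metric.infEDist z (G k) < ENNReal.ofReal (4 * i * s))
          (fun a ha b _ hab hna ⟨k, hk⟩ => hna ⟨k, hstep k b a (by exact ha k) hab.symm hk⟩)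
          hx).mono fun z hz => ?_⟩
        have hz' : z ∈ Y₀ ∪ ⋃ j, G j := hcov ▸ mem_univ z
        refine hz'.resolve_right fun hzG => ?_
        obtain ⟨k, hk⟩ := mem_iUnion.1 hzG
        have hge := (hz.1 k).resolve_left fun h => hz.2 ⟨k, h⟩
        rw [Metric.infEDist_zero_of_mem hk, nonpos_iff_eq_zero, ENNReal.ofReal_eq_zero] at hge
        linarith
  · exact fun i k y hy => hy.2.trans_le (ENNReal.ofReal_le_ofReal (hiN i))
  · have key : ∀ k (i j : Fin N) (a b : Y), i < j →
        Metric.infEDist a (G k) < ENNReal.ofReal (4 * i * s + 2 * s) →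
        ENNReal.ofReal (4 * j * s) ≤ Metric.infEDist b (G k) → ¬ BallsMeet s a b := by
      intro k i j a b hij ha hb hab
      have hlt := hb.trans_lt (infEDist_lt_of_ballsMeet hs hab (by positivity) ha)
      have hle : (i : ℝ) + 1 ≤ j := by exact_mod_cast hij
      exact hlt.not_ge (ENNReal.ofReal_le_ofReal (by nlinarith))
    intro k i j a b ha hb hab
    rcases lt_trichotomy i j with h | h | h
    · exact absurd hab (key k i j a b h ha.2 hb.1)
    · exact h
    · exact absurd hab.symm (key k j i b a h hb.2 ha.1)

/-- A set of scale-`r`-dimension `0` can be coloured by finitely many colours, constantly along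
scale-`r`-chains, with colour classes of scale-`s`-dimension `0`. -/
theorem APDPair.exists_coloring {X : Type*} [PseudoEMetricSpace X] {α : ℝ → ℝ}
    (hX : APDPair X α) {r s : ℝ} (hs : 0 < s) {X₀ : Set X} (h₀ : ScaleDimZero r X₀) :
    ∃ (N : ℕ) (col : X → Fin N),
      (∀ x ∈ X₀, ∀ y ∈ X₀, BallsMeet r x y → col x = col y) ∧
      ∀ i, ScaleDimZero s {x | x ∈ X₀ ∧ col x = i} := by
  obtain ⟨M, hM, hMX⟩ := scaleDimZero_iff.1 h₀
  obtain ⟨N, Z, hZ, hZ₀⟩ := hX.exists_finite_cover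
    (s := s + M.toReal) (add_pos_of_pos_of_nonneg hs ENNReal.toReal_nonneg)
  have hcol : ∀ S : Set X, ∃ i, S.Nonempty → ∃ z ∈ S, z ∈ Z i := by
    intro S
    rcases S.eq_empty_or_nonempty with rfl | ⟨z, hz⟩
    · exact ⟨0, fun h => absurd h not_nonempty_empty⟩
    · obtain ⟨i, hi⟩ := hZ z
      exact ⟨i, fun _ => ⟨z, hz, hi⟩⟩
  choose col hcol using hcol
  refine ⟨N + 1, fun x => col (ScaleComponent r X₀ x), fun x hx y hy hxy => ?_, fun i => ?_⟩
  · exact congrArg col (scaleComponent_eq_of_ballsMeet hx hy hxy)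
  · refine (hZ₀ i).of_edist_le hs.le ENNReal.toReal_nonneg ?_
    rintro x ⟨hx, rfl⟩
    obtain ⟨z, hz, hzi⟩ := hcol (ScaleComponent r X₀ x) ⟨x, ScaleChain.refl hx⟩
    exact ⟨z, hzi, by rw [ENNReal.ofReal_toReal hM]; exact hMX x z hz⟩

/-- Multiplying by a set of scale-`r`-dimension `0` does not increase the APD profile. -/
theorem APDPair.exists_cover_prod_univ {X Y : Type*} [PseudoEMetricSpace X]
    [PseudoEMetricSpace Y] {α β : ℝ → ℝ} (hX : APDPair X α) (hY : APDPair Y β) {r s : ℝ}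
    (hr : 0 < r) (hrs : r ≤ s) {X₀ : Set X} (h₀ : ScaleDimZero r X₀) :
    ∃ (W : Set (X × Y)) (G : Fin ⌊β r⌋₊ → Set (X × Y)), ScaleDimZero r W ∧
      (∀ k, ScaleDimZero s (G k)) ∧ ∀ p : X × Y, p.1 ∈ X₀ → p ∈ W ∨ ∃ k, p ∈ G k := by
  obtain ⟨N, col, hcol, hcol₀⟩ := hX.exists_coloring (hr.trans_le hrs) h₀
  obtain ⟨B, A, D, hcov, hB, hAD, hD, hsep⟩ := hY.exists_separated_decompositions hr hrs N
  refine ⟨{p | p.1 ∈ X₀ ∧ p.2 ∈ B (col p.1)}, fun k => {p | p.1 ∈ X₀ ∧ p.2 ∈ A (col p.1) k},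
    ?_, fun k => ?_, fun p hp => ?_⟩
  · refine scaleDimZero_of_finite (fun i => X₀ ×ˢ B i) (fun i => h₀.prod (hB i)) ?_
    intro p q hpq
    refine ⟨col p.1, (hpq.inter_of_step (fun z => col z.1 = col p.1) ?_ rfl).mono ?_⟩
    · exact fun a ha b hb hab h => (hcol _ ha.1 _ hb.1 hab.fst).symm.trans h
    · rintro z ⟨⟨hz, hzB⟩, hzc⟩
      exact ⟨hz, hzc ▸ hzB⟩
  · refine scaleDimZero_of_finite (fun i => {x | x ∈ X₀ ∧ col x = i} ×ˢ D k)
      (fun i => (hcol₀ i).prod (hD k)) ?_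
    intro p q hpq
    refine ⟨col p.1, (hpq.inter_of_step (fun z => col z.1 = col p.1) ?_ rfl).mono ?_⟩
    · exact fun a ha b hb hab h => (hsep k _ _ _ _ ha.2 hb.2 hab.snd).symm.trans h
    · rintro z ⟨⟨hz, hzA⟩, hzc⟩
      exact ⟨⟨hz, hzc⟩, hAD _ _ hzA⟩
  · exact (hcov (col p.1) p.2).imp (fun h => ⟨hp, h⟩) fun ⟨k, hk⟩ => ⟨k, hp, hk⟩

/-- Let `X` and `Y` be `∞`-pseudo-metric spaces. If `(1, α)` is an APD profile of `X` and
`(1, β)` is an APD profile of `Y`, then `(2, α·β + α + β)` is an APD profile of `X × Y` with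
the supremum `∞`-pseudo-metric: for all reals `0 < r ≤ s` there is a decomposition
`X × Y = W₀ ∪ W₁` such that `W₀` is the union of at most `2` subsets of scale-`r`-dimension
`0` and `W₁` is the union of at most `⌊α r⌋·⌊β r⌋ + ⌊α r⌋ + ⌊β r⌋` subsets of
scale-`s`-dimension `0`. -/
theorem apdPair_prod {X Y : Type*} [PseudoEMetricSpace X] [PseudoEMetricSpace Y]
    (α β : ℝ → ℝ)
    (hαmono : MonotoneOn α (Set.Ioi (0 : ℝ))) (hαnonneg : ∀ t : ℝ, 0 < t → 0 ≤ α t)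
    (hβmono : MonotoneOn β (Set.Ioi (0 : ℝ))) (hβnonneg : ∀ t : ℝ, 0 < t → 0 ≤ β t)
    (hX : APDPair X α) (hY : APDPair Y β) :
    ∀ r s : ℝ, 0 < r → r ≤ s →
      ∃ W₀ W₁ : Set (X × Y), W₀ ∪ W₁ = univ ∧ UnionAtMost 2 r W₀ ∧
        UnionAtMost (Nat.floor (α r) * Nat.floor (β r) + Nat.floor (α r) + Nat.floor (β r))
          s W₁ := by
  intro r s hr hrs
  obtain ⟨X₀, X₁, hXcov, hX₀, A, rfl, hA⟩ := hX r s hr hrs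
  obtain ⟨Y₀, Y₁, hYcov, hY₀, B, rfl, hB⟩ := hY r s hr hrs
  obtain ⟨W, G, hW, hG, hWG⟩ := hX.exists_cover_prod_univ hY hr hrs hX₀
  obtain ⟨V, H, hV, hH, hVH⟩ := hY.exists_cover_prod_univ hX hr hrs hY₀
  let F : (Fin ⌊α r⌋₊ × Fin ⌊β r⌋₊ ⊕ Fin ⌊α r⌋₊) ⊕ Fin ⌊β r⌋₊ → Set (X × Y) :=
    Sum.elim (Sum.elim (fun k => A k.1 ×ˢ B k.2) fun k => Prod.swap ⁻¹' H k) G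
  refine ⟨⋃ b : Bool, cond b W (Prod.swap ⁻¹' V), ⋃ i, F i, ?_,
    unionAtMost_iUnion (by simp) _ ?_, unionAtMost_iUnion (by simp) F ?_⟩
  · refine eq_univ_of_forall fun p => ?_
    have hx : p.1 ∈ X₀ ∪ ⋃ j, A j := hXcov ▸ mem_univ p.1
    have hy : p.2 ∈ Y₀ ∪ ⋃ j, B j := hYcov ▸ mem_univ p.2
    rcases hx with hx | hx
    · rcases hWG p hx with h | ⟨k, h⟩
      · exact Or.inl (mem_iUnion.2 ⟨true, h⟩)
      · exact Or.inr (mem_iUnion.2 ⟨Sum.inr k, h⟩)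
    rcases hy with hy | hy
    · rcases hVH p.swap hy with h | ⟨k, h⟩
      · exact Or.inl (mem_iUnion.2 ⟨false, h⟩)
      · exact Or.inr (mem_iUnion.2 ⟨Sum.inl (Sum.inr k), h⟩)
    obtain ⟨i, hi⟩ := mem_iUnion.1 hx
    obtain ⟨j, hj⟩ := mem_iUnion.1 hy
    exact Or.inr (mem_iUnion.2 ⟨Sum.inl (Sum.inl (i, j)), hi, hj⟩)
  · rintro (_ | _)
    · exact hV.preimage_swap
    · exact hW
  · rintro ((k | k) | k)
    · exact (hA k.1).prod (hB k.2)
    · exact (hH k).preimage_swap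
    · exact hG k
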